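/- arXiv:1204.6459 — 2 statements merged into one kernel-verified Lean document; each statement's English description precedes it below -/
import Mathlib

section
/- Let F be a finite field with q elements, let 1 ≤ k < n ≤ q with 2(n−k)−1 ≤ n, let x ∈ F^n have pairwise distinct entries and y ∈ F^n have all entries nonzero. Then there exists y'' ∈ F^n with all entries nonzero such that ⟨(GRS_k(x,y)^⊥)²⟩ = GRS_{2(n−k)−1}(x, y''); in particular dim⟨(GRS_k(x,y)^⊥)²⟩ = 2(n−k)−1. -/
/-!
The dual of a generalized Reed–Solomon code is again one: with `w i = λ i / y i`, where
`λ i = ∏ j ≠ i, (x i - x j)⁻¹` are the Lagrange weights, `GRS_k(x,y)^⊥ = GRS_{n-k}(x,w)`.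
Both inclusions come from the identity `∑ i, λ i * p (x i) = [X^(n-1)] p`, valid for
`deg p < n`. It gives orthogonality at once. Conversely, write a dual word as the evaluation of an
interpolating polynomial `p` of degree `d < n`; if `d ≥ n - k`, pairing it with the codeword of
`X^(n-1-d)` yields the leading coefficient of `p`, which is nonzero, a contradiction.

Squaring `GRS_m(x,w)` gives `GRS_{2m-1}(x,w⋆w)`, since each monomial of degree at most
`2m-2` is a product of two monomials of degree at most `m-1`. The dimension follows because a
polynomial of degree less than `n` vanishing at `n` distinct points is zero.
-/

/-- The star product code `⟨A ⋆ B⟩`. -/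
noncomputable def starCode {F : Type*} [Field F] {n : ℕ} (A B : Submodule F (Fin n → F)) :
    Submodule F (Fin n → F) :=
  Submodule.span F {w | ∃ a ∈ A, ∃ b ∈ B, w = a * b}

/-- The dual code `C^⊥ = {u : ⟨u,c⟩ = 0 for all c ∈ C}`. -/
def dualCode {F : Type*} [Field F] {n : ℕ} (C : Submodule F (Fin n → F)) :
    Submodule F (Fin n → F) where
  carrier := {u | ∀ c ∈ C, ∑ i, u i * c i = 0}
  zero_mem' := by intro c hc; simp
  add_mem' := by
    intro u v hu hv c hc
    simp only [Pi.add_apply, add_mul, Finset.sum_add_distrib, hu c hc, hv c hc, add_zero]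
  smul_mem' := by
    intro t u hu c hc
    simp only [Pi.smul_apply, smul_eq_mul, mul_assoc, ← Finset.mul_sum, hu c hc, mul_zero]

/-- The evaluation map `p ↦ (y_1 p(x_1), …, y_n p(x_n))`. -/
noncomputable def GRSevalMap {F : Type*} [Field F] {n : ℕ} (x y : Fin n → F) :
    Polynomial F →ₗ[F] (Fin n → F) where
  toFun := fun p => fun i => y i * p.eval (x i)
  map_add' := fun p q => by funext i; simp [mul_add]
  map_smul' := fun c p => by funext i; simp [Polynomial.eval_smul, smul_eq_mul]; ring

/-- The generalized Reed–Solomon code `GRS_k(x,y)`. -/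
noncomputable def GRS {F : Type*} [Field F] (n k : ℕ) (x y : Fin n → F) :
    Submodule F (Fin n → F) :=
  Submodule.map (GRSevalMap x y) (Polynomial.degreeLT F k)

open Polynomial in
/-- The functional `p ↦ ∑ i, λ i * p (x i)` given by the Lagrange weights reads off the coefficient
of `X ^ (n - 1)`. -/
lemma sum_nodalWeight_mul_eval {F : Type*} [Field F] {n : ℕ} {x : Fin n → F}
    (hx : Function.Injective x) {p : F[X]} (hp : p.degree < n) :
    ∑ i, Lagrange.nodalWeight Finset.univ x i * p.eval (x i) = p.coeff (n - 1) := by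
  have h := Lagrange.coeff_eq_sum (s := Finset.univ) (v := x) hx.injOn (P := p) (by simpa using hp)
  rw [Finset.card_fin] at h
  rw [h]
  refine Finset.sum_congr rfl fun i _ => ?_
  rw [Lagrange.nodalWeight, Finset.prod_inv_distrib, div_eq_mul_inv, mul_comm]

open Polynomial in
lemma dualCode_GRS {F : Type*} [Field F] {n k : ℕ} (hkn : k < n) {x y : Fin n → F}
    (hx : Function.Injective x) (hy : ∀ i, y i ≠ 0) :
    dualCode (GRS n k x y) =
      GRS n (n - k) x fun i => Lagrange.nodalWeight Finset.univ x i / y i := by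
  have hw : ∀ i, Lagrange.nodalWeight Finset.univ x i ≠ 0 := fun i =>
    Lagrange.nodalWeight_ne_zero hx.injOn (Finset.mem_univ i)
  have hpair : ∀ p g : F[X],
      ∑ i, (Lagrange.nodalWeight Finset.univ x i / y i * p.eval (x i)) * (y i * g.eval (x i)) =
        ∑ i, Lagrange.nodalWeight Finset.univ x i * (p * g).eval (x i) := by
    intro p g
    refine Finset.sum_congr rfl fun i _ => ?_
    have := hy i
    rw [eval_mul]
    field_simp
  apply le_antisymm
  · intro u hu
    let r : Fin n → F := fun i => u i * y i / Lagrange.nodalWeight Finset.univ x i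
    let p := Lagrange.interpolate Finset.univ x r
    have hp : p.degree < n := by
      simpa only [Finset.card_fin] using
        Lagrange.degree_interpolate_lt (s := Finset.univ) r hx.injOn
    have hpu : ∀ i, Lagrange.nodalWeight Finset.univ x i / y i * p.eval (x i) = u i := by
      intro i
      rw [Lagrange.eval_interpolate_at_node r hx.injOn (Finset.mem_univ i)]
      have := hy i
      have := hw i
      simp only [r]
      field_simp
    refine ⟨p, mem_degreeLT.2 ?_, funext hpu⟩
    by_contra! hd
    have hp0 : p ≠ 0 := by
      rintro h
      rw [h, degree_zero] at hd
      simp at hd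
    rw [degree_eq_natDegree hp0, Nat.cast_le] at hd
    rw [degree_eq_natDegree hp0, Nat.cast_lt] at hp
    -- The codeword of `X ^ (n - 1 - deg p)` pairs with `u` to the leading coefficient of `p`.
    have h0 := hu (GRSevalMap x y (X ^ (n - 1 - p.natDegree)))
      ⟨_, mem_degreeLT.2 (by rw [degree_X_pow, Nat.cast_lt]; omega), rfl⟩
    have h1 := hpair p (X ^ (n - 1 - p.natDegree))
    simp only [hpu] at h1
    have h2 : (p * X ^ (n - 1 - p.natDegree)).degree < (n : WithBot ℕ) := by
      rw [degree_mul, degree_X_pow, degree_eq_natDegree hp0, ← Nat.cast_add, Nat.cast_lt]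
      omega
    rw [sum_nodalWeight_mul_eval hx h2] at h1
    have h3 := coeff_mul_X_pow p (n - 1 - p.natDegree) p.natDegree
    rw [Nat.add_sub_cancel' (by omega : p.natDegree ≤ n - 1), ← h1] at h3
    exact hp0 (leadingCoeff_eq_zero.1 (h3.symm.trans h0))
  · rintro _ ⟨p, hp, rfl⟩ _ ⟨g, hg, rfl⟩
    have hp' := mem_degreeLT.1 hp
    have hg' := mem_degreeLT.1 hg
    have hpg : (p * g).degree < ((n - 1 : ℕ) : WithBot ℕ) := by
      by_cases hp0 : p = 0
      · simp [hp0]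
      by_cases hg0 : g = 0
      · simp [hg0]
      rw [degree_eq_natDegree hp0, Nat.cast_lt] at hp'
      rw [degree_eq_natDegree hg0, Nat.cast_lt] at hg'
      rw [degree_mul, degree_eq_natDegree hp0, degree_eq_natDegree hg0, ← Nat.cast_add,
        Nat.cast_lt]
      omega
    refine (hpair p g).trans ?_
    rw [sum_nodalWeight_mul_eval hx (hpg.trans_le (Nat.cast_le.2 (Nat.sub_le n 1)))]
    exact coeff_eq_zero_of_degree_lt hpg

open Polynomial in
lemma starCode_GRS_self {F : Type*} [Field F] {n m : ℕ} (hm : 1 ≤ m) (x w : Fin n → F) :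
    starCode (GRS n m x w) (GRS n m x w) = GRS n (2 * m - 1) x (w * w) := by
  classical
  have hmul : ∀ p g : F[X],
      GRSevalMap x w p * GRSevalMap x w g = GRSevalMap x (w * w) (p * g) := by
    intro p g
    funext i
    simp only [GRSevalMap, LinearMap.coe_mk, AddHom.coe_mk, Pi.mul_apply, eval_mul]
    ring
  apply le_antisymm
  · refine Submodule.span_le.2 ?_
    rintro _ ⟨_, ⟨p, hp, rfl⟩, _, ⟨g, hg, rfl⟩, rfl⟩
    refine ⟨p * g, mem_degreeLT.2 ?_, (hmul p g).symm⟩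
    have hp' := mem_degreeLT.1 hp
    have hg' := mem_degreeLT.1 hg
    by_cases hp0 : p = 0
    · simp [hp0]
    by_cases hg0 : g = 0
    · simp [hg0]
    rw [degree_eq_natDegree hp0, Nat.cast_lt] at hp'
    rw [degree_eq_natDegree hg0, Nat.cast_lt] at hg'
    rw [degree_mul, degree_eq_natDegree hp0, degree_eq_natDegree hg0, ← Nat.cast_add,
      Nat.cast_lt]
    omega
  · rw [GRS, degreeLT_eq_span_X_pow, Submodule.map_span, Submodule.span_le]
    rintro _ ⟨_, hj, rfl⟩
    simp only [Finset.coe_image, Set.mem_image, Finset.mem_coe, Finset.mem_range] at hj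
    obtain ⟨j, hj, rfl⟩ := hj
    have hX : ∀ a < m, GRSevalMap x w (X ^ a) ∈ GRS n m x w := fun a ha =>
      ⟨_, mem_degreeLT.2 (by rw [degree_X_pow, Nat.cast_lt]; exact ha), rfl⟩
    -- Split `j ≤ 2m - 2` as a sum of two exponents at most `m - 1`.
    refine Submodule.subset_span ⟨_, hX (min j (m - 1)) (by omega), _,
      hX (j - min j (m - 1)) (by omega), ?_⟩
    rw [hmul, ← pow_add, Nat.add_sub_cancel' (min_le_left _ _)]

open Polynomial in
lemma finrank_GRS {F : Type*} [Field F] {n m : ℕ} (hm : m ≤ n) {x w : Fin n → F}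
    (hx : Function.Injective x) (hw : ∀ i, w i ≠ 0) :
    Module.finrank F (GRS n m x w) = m := by
  have hinj : Function.Injective ((GRSevalMap x w).domRestrict (degreeLT F m)) := by
    rw [injective_iff_map_eq_zero]
    rintro ⟨p, hp⟩ h
    have hp' := mem_degreeLT.1 hp
    refine Subtype.ext (eq_zero_of_degree_lt_of_eval_index_eq_zero Finset.univ
      (v := x) hx.injOn ?_ fun i _ => ?_)
    · rw [Finset.card_fin]
      exact hp'.trans_le (Nat.cast_le.2 hm)
    · exact (mul_eq_zero.1 (congrFun h i)).resolve_left (hw i)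
  rw [GRS, ← LinearMap.range_domRestrict, LinearMap.finrank_range_of_inj hinj,
    (degreeLTEquiv F m).finrank_eq, Module.finrank_fin_fun]

/-- if `1 ≤ k < n ≤ q` with `2(n-k) - 1 ≤ n`, `x` has pairwise distinct
entries and `y` has nonzero entries, then `⟨(GRS_k(x,y)^⊥)²⟩ = GRS_{2(n-k)-1}(x, y'')`
for some `y''` with nonzero entries, and in particular its dimension is `2(n-k) - 1`. -/
theorem square_dual_GRS {F : Type*} [Field F] [Fintype F] (q n k : ℕ)
    (hq : Fintype.card F = q) (hk : 1 ≤ k) (hkn : k < n) (hn : n ≤ q)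
    (hnk : 2 * (n - k) - 1 ≤ n)
    (x y : Fin n → F) (hx : Function.Injective x) (hy : ∀ i, y i ≠ 0) :
    (∃ y'' : Fin n → F, (∀ i, y'' i ≠ 0) ∧
        starCode (dualCode (GRS n k x y)) (dualCode (GRS n k x y)) =
          GRS n (2 * (n - k) - 1) x y'') ∧
      Module.finrank F ↥(starCode (dualCode (GRS n k x y)) (dualCode (GRS n k x y))) =
        2 * (n - k) - 1 := by
  have hw : ∀ i, Lagrange.nodalWeight Finset.univ x i / y i ≠ 0 := fun i =>
    div_ne_zero (Lagrange.nodalWeight_ne_zero hx.injOn (Finset.mem_univ i)) (hy i)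
  rw [dualCode_GRS hkn hx hy, starCode_GRS_self (by omega)]
  exact ⟨⟨_, fun i => mul_ne_zero (hw i) (hw i), rfl⟩,
    finrank_GRS hnk hx fun i => mul_ne_zero (hw i) (hw i)⟩
end

section
/- In the setup below, with C = GRS_k(x,y) and 2k−1 ≤ n, let C_{λ⊥} := C ∩ ⟨λ⟩^⊥ = {p ∈ C : ⟨λ,p⟩ = 0}, let g_1,…,g_k be elements of C_pub, and let z_1, z_2, z_3 ∈ C_{λ⊥}. Then the subspace B of F^n spanned by {z_i ⋆ g_j : 1 ≤ i ≤ 3, 1 ≤ j ≤ k} satisfies dim(B) ≤ 2k + 2. -/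
open scoped Matrix

/-- The product of two codewords of `GRS_k(x,y)` comes from a product of two polynomials of degree
at most `k - 1`, so it lies in `GRS_{2k-1}(x, y ⋆ y)`. -/
theorem GRS_mul_mem {F : Type*} [Field F] {n k : ℕ} (x y : Fin n → F)
    {u v : Fin n → F} (hu : u ∈ GRS n k x y) (hv : v ∈ GRS n k x y) :
    u * v ∈ GRS n (2 * k - 1) x (y * y) := by
  obtain ⟨p, hp, rfl⟩ := hu
  obtain ⟨r, hr, rfl⟩ := hv
  refine ⟨p * r, ?_, ?_⟩
  · have hp' := Polynomial.mem_degreeLT.1 hp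
    have hr' := Polynomial.mem_degreeLT.1 hr
    by_cases hp0 : p = 0
    · simp [hp0]
    by_cases hr0 : r = 0
    · simp [hr0]
    rw [← Polynomial.natDegree_lt_iff_degree_lt hp0] at hp'
    rw [← Polynomial.natDegree_lt_iff_degree_lt hr0] at hr'
    refine Polynomial.mem_degreeLT.2 ?_
    rw [← Polynomial.natDegree_lt_iff_degree_lt (mul_ne_zero hp0 hr0),
      Polynomial.natDegree_mul hp0 hr0]
    omega
  · funext i
    simp only [GRSevalMap, LinearMap.coe_mk, AddHom.coe_mk, Pi.mul_apply, Polynomial.eval_mul]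
    ring

theorem finrank_GRS_le {F : Type*} [Field F] (n k : ℕ) (x y : Fin n → F) :
    Module.finrank F (GRS n k x y) ≤ k := by
  haveI : Module.Finite F (Polynomial.degreeLT F k) :=
    Module.Finite.equiv (Polynomial.degreeLTEquiv F k).symm
  refine (Submodule.finrank_map_le (GRSevalMap x y) (Polynomial.degreeLT F k)).trans ?_
  rw [(Polynomial.degreeLTEquiv F k).finrank_eq]
  simp

/-- A word `g` of the public code differs from a codeword of `C` by a multiple of `a`:
if `g = p P⁻¹` then `p = g P = g + ⟨g,b⟩ a`. -/
theorem exists_sub_smul_of_mem_pub {F : Type*} [Field F] {n : ℕ} (a b : Fin n → F)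
    (hab : (1 + ∑ i, a i * b i) ≠ 0) (C : Submodule F (Fin n → F)) {g : Fin n → F}
    (hg : g ∈ C.map (Matrix.vecMulLinear (1 + Matrix.vecMulVec b a)⁻¹)) :
    ∃ p ∈ C, ∃ c : F, g = p - c • a := by
  obtain ⟨p, hp, rfl⟩ := hg
  have hdet : IsUnit (1 + Matrix.vecMulVec b a).det := by
    rw [Matrix.vecMulVec_eq Unit, Matrix.det_one_add_replicateCol_mul_replicateRow]
    exact hab.isUnit
  refine ⟨p, hp, (p ᵥ* (1 + Matrix.vecMulVec b a)⁻¹) ⬝ᵥ b, ?_⟩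
  have h : (p ᵥ* (1 + Matrix.vecMulVec b a)⁻¹) ᵥ* (1 + Matrix.vecMulVec b a) = p := by
    rw [Matrix.vecMul_vecMul, Matrix.nonsing_inv_mul _ hdet, Matrix.vecMul_one]
  rw [Matrix.vecMul_add, Matrix.vecMul_one, Matrix.vecMul_vecMulVec] at h
  exact eq_sub_of_add_eq h

/-- Proposition 5, second part: in the Baldi et al. setup with
`C = GRS_k(x,y)` and `2k - 1 ≤ n`, if `z_1, z_2, z_3 ∈ C_{λ⊥} = {p ∈ C : ⟨λ,p⟩ = 0}`
and `g_1,…,g_k ∈ C_pub`, then the span `B` of the vectors `z_i ⋆ g_j` has dimension at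
most `2k + 2`. -/
theorem dim_B_le_of_Clambda {F : Type*} [Field F] [Fintype F] (q n k : ℕ)
    (hq : Fintype.card F = q) (hk : 1 ≤ k) (hkn : k ≤ n) (hn : n ≤ q)
    (h2k : 2 * k - 1 ≤ n)
    (x y : Fin n → F) (hx : Function.Injective x) (hy : ∀ i, y i ≠ 0)
    (a b : Fin n → F) (hab : (1 + ∑ i, a i * b i) ≠ 0)
    (P : Matrix (Fin n) (Fin n) F) (hP : P = 1 + Matrix.vecMulVec b a)
    (lam : Fin n → F) (hlam : lam = -(1 + ∑ i, a i * b i)⁻¹ • b)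
    (C Cpub : Submodule F (Fin n → F))
    (hC : C = GRS n k x y)
    (hCpub : Cpub = C.map (Matrix.vecMulLinear P⁻¹))
    (g : Fin k → Fin n → F) (hg : ∀ j, g j ∈ Cpub)
    (z : Fin 3 → Fin n → F) (hz : ∀ i, z i ∈ C ∧ ∑ t, lam t * z i t = 0) :
    Module.finrank F ↥(Submodule.span F
      {w : Fin n → F | ∃ i : Fin 3, ∃ j : Fin k, w = z i * g j}) ≤ 2 * k + 2 := by
  subst hP hC hCpub
  have hle : Submodule.span F {w : Fin n → F | ∃ i : Fin 3, ∃ j : Fin k, w = z i * g j} ≤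
      GRS n (2 * k - 1) x (y * y) ⊔ Submodule.span F (Set.range fun i => z i * a) := by
    rw [Submodule.span_le]
    rintro _ ⟨i, j, rfl⟩
    obtain ⟨p, hp, c, hc⟩ := exists_sub_smul_of_mem_pub a b hab _ (hg j)
    rw [hc, mul_sub, mul_smul_comm]
    exact Submodule.sub_mem _
      (Submodule.mem_sup_left (GRS_mul_mem x y (hz i).1 hp))
      (Submodule.mem_sup_right (Submodule.smul_mem _ _ (Submodule.subset_span ⟨i, rfl⟩)))
  have h1 := Submodule.finrank_mono hle
  have h2 := Submodule.finrank_add_le_finrank_add_finrank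
    (GRS n (2 * k - 1) x (y * y)) (Submodule.span F (Set.range fun i => z i * a))
  have h3 := finrank_GRS_le n (2 * k - 1) x (y * y)
  have h4 : Module.finrank F (Submodule.span F (Set.range fun i => z i * a)) ≤ 3 := by
    simpa [Set.finrank] using finrank_range_le_card (R := F) (fun i => z i * a)
  omega
end
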